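/- Fix q ∈ (0,1) and a positive integer L. Then lim_{n→∞} 𝒫_n^q(S(n, n−L)) = (1−q) q^{L−1} L, where the strategy S(n, n−L) is considered for all n > L. -/

import Mathlib

open Finset Filter

/-- The number of inversions of a permutation of `Fin n`. -/
def invCount (n : ℕ) (σ : Equiv.Perm (Fin n)) : ℕ :=
  (Finset.univ.filter (fun p : Fin n × Fin n => p.1 < p.2 ∧ σ p.2 < σ p.1)).card

/-- Normalization constant of the Mallows distribution:
`Z_n(q) = ∑_{σ ∈ S_n} q^{inv σ}`. -/
noncomputable def mallowsZ (n : ℕ) (q : ℝ) : ℝ :=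
  ∑ σ : Equiv.Perm (Fin n), q ^ invCount n σ

/-- The Mallows probability of a set `A` of permutations:
`P_n^q(A) = (∑_{σ ∈ A} q^{inv σ}) / Z_n(q)`. -/
noncomputable def mallowsProb (n : ℕ) (q : ℝ) (A : Finset (Equiv.Perm (Fin n))) : ℝ :=
  (∑ σ ∈ A, q ^ invCount n σ) / mallowsZ n q

/-- The success event for the strategy `S(n,M)`.  Positions are indexed by `Fin n`
(the index `i : Fin n` represents the `(i+1)`-st arriving item) and ranks are the
values of `σ` (the value `n-1`, i.e. the top of `Fin n`, represents the highest
rank `n`).  For `M ≥ 1` the strategy succeeds iff for some position `j` with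
`(j:ℕ) ≥ M` (i.e. item number `j+1 ≥ M+1`) the item at position `j` has the top
rank and the maximum rank among the items strictly before position `j` equals the
maximum rank among the first `M` items.  For `M = 0` it succeeds iff the first
item has top rank. -/
def winEvent (n M : ℕ) : Finset (Equiv.Perm (Fin n)) :=
  if M = 0 then
    Finset.univ.filter (fun σ => ∀ i : Fin n, (i : ℕ) = 0 → (σ i : ℕ) = n - 1)
  else
    Finset.univ.filter (fun σ => ∃ j : Fin n, M ≤ (j : ℕ) ∧ (σ j : ℕ) = n - 1 ∧
      (Finset.univ.filter (fun i : Fin n => i < j)).sup (fun i => (σ i : ℕ)) =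
      (Finset.univ.filter (fun i : Fin n => (i : ℕ) < M)).sup (fun i => (σ i : ℕ)))

/-- `𝒫_n^q(S(n,M))`, the success probability of the strategy `S(n,M)` under the
Mallows distribution with parameter `q`. -/
noncomputable def succProb (n M : ℕ) (q : ℝ) : ℝ := mallowsProb n q (winEvent n M)

/-!
A record is an item better than all earlier ones. The best item is always the last record, so
`S(n, M)` succeeds exactly when there is a single record after the first `M` items. Building a
Mallows permutation by inserting its last value, whose rank is independent of the relative order of
the earlier items, shows that item `m` is a record with probability `1 / (1 + q + ⋯ + q ^ (m - 1))`,
independently of the records before it. These probabilities tend to `1 - q`, so the number of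
records among the last `L` items is asymptotically binomial with parameters `L` and `1 - q`, and
the limit is the binomial probability of exactly one record.
-/

section Records

variable {n M : ℕ}

/-- Position `j` is a record (left-to-right maximum) of `f`. -/
def IsRecord {ι α : Type*} [LT ι] [LT α] (f : ι → α) (j : ι) : Prop :=
  ∀ i < j, f i < f j

instance (σ : Equiv.Perm (Fin n)) : DecidablePred (IsRecord σ) :=
  fun j => inferInstanceAs (Decidable (∀ i < j, σ i < σ j))

/-- The number of records of `σ` at positions `j ≥ M`, that is, among the items arriving after the
first `M`. -/
def recordCount (M : ℕ) (σ : Equiv.Perm (Fin n)) : ℕ :=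
  #{j : Fin n | M ≤ (j : ℕ) ∧ IsRecord σ j}

lemma recordCount_eq_zero_of_le (h : n ≤ M) (σ : Equiv.Perm (Fin n)) : recordCount M σ = 0 :=
  card_eq_zero.2 <| filter_eq_empty_iff.2 fun j _ hj => (j.2.trans_le h).not_ge hj.1

lemma IsRecord.le_of_forall_le {ι α : Type*} [LinearOrder ι] [Preorder α] {f : ι → α} {j p : ι}
    (hj : IsRecord f j) (hp : ∀ i, f i ≤ f p) : j ≤ p :=
  not_lt.1 fun hpj => (hj p hpj).not_ge (hp j)

lemma isRecord_of_forall_le {ι α : Type*} [Preorder ι] [PartialOrder α] {f : ι → α}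
    (hf : f.Injective) {p : ι} (hp : ∀ i, f i ≤ f p) : IsRecord f p :=
  fun i hi => (hp i).lt_of_ne (hf.ne hi.ne)

lemma isRecord_last_iff {σ : Equiv.Perm (Fin (n + 1))} :
    IsRecord σ (Fin.last n) ↔ σ (Fin.last n) = Fin.last n := by
  constructor
  · intro h
    have top_le : Fin.last n ≤ σ.symm (Fin.last n) :=
      h.le_of_forall_le fun i => by simpa using Fin.le_last (σ i)
    rw [← Fin.last_le_iff.1 top_le, σ.apply_symm_apply, Fin.last_le_iff.1 top_le]
  · intro h
    exact isRecord_of_forall_le σ.injective fun i => (Fin.le_last (σ i)).trans_eq h.symm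

lemma recordCount_eq_one_iff_of_forall_le {σ : Equiv.Perm (Fin n)} {p : Fin n}
    (hp : ∀ i, σ i ≤ σ p) :
    recordCount M σ = 1 ↔
      M ≤ (p : ℕ) ∧ ∀ i : Fin n, M ≤ (i : ℕ) → i < p → ¬ IsRecord σ i := by
  have p_record : IsRecord σ p := isRecord_of_forall_le σ.injective hp
  rw [recordCount, card_eq_one]
  constructor
  · rintro ⟨j, hj⟩
    have record_iff (i : Fin n) : M ≤ (i : ℕ) ∧ IsRecord σ i ↔ i = j := by
      simpa using Finset.ext_iff.1 hj i
    obtain ⟨hMj, j_record⟩ := (record_iff j).2 rfl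
    have hMp : M ≤ (p : ℕ) := hMj.trans (Fin.le_def.1 (j_record.le_of_forall_le hp))
    have p_eq : p = j := (record_iff p).1 ⟨hMp, p_record⟩
    exact ⟨hMp, fun i hMi hip hi => hip.ne (((record_iff i).1 ⟨hMi, hi⟩).trans p_eq.symm)⟩
  · rintro ⟨hMp, h⟩
    refine ⟨p, eq_singleton_iff_unique_mem.2 ⟨by simpa using ⟨hMp, p_record⟩, fun i hi => ?_⟩⟩
    obtain ⟨hMi, i_record⟩ : M ≤ (i : ℕ) ∧ IsRecord σ i := by simpa using hi
    exact (i_record.le_of_forall_le hp).eq_of_not_lt fun hip => h i hMi hip i_record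

lemma sup_lt_eq_sup_lt_iff_forall_not_isRecord {α : Type*} [LinearOrder α] [OrderBot α]
    (f : Fin n → α) {j : Fin n} (hM : M ≠ 0) (hMj : M ≤ (j : ℕ)) :
    ({i | i < j} : Finset (Fin n)).sup f = ({i | (i : ℕ) < M} : Finset (Fin n)).sup f ↔
      ∀ i : Fin n, M ≤ (i : ℕ) → i < j → ¬ IsRecord f i := by
  constructor
  · intro h i hMi hij hi
    have first_lt : f ⟨0, by omega⟩ < f i := hi _ (Fin.lt_def.2 (by simp only; omega))
    have sup_lt : ({k | (k : ℕ) < M} : Finset (Fin n)).sup f < f i := by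
      refine (Finset.sup_lt_iff (bot_le.trans_lt first_lt)).2 fun k hk => hi k ?_
      exact Fin.lt_def.2 ((mem_filter.1 hk).2.trans_le hMi)
    exact sup_lt.not_ge (h ▸ le_sup (by simpa using hij))
  · intro h
    refine le_antisymm (Finset.sup_le fun i hi => ?_) (sup_mono fun i hi => ?_)
    · replace hi : i < j := by simpa using hi
      induction i using WellFoundedLT.induction with
      | ind i ih =>
        rcases lt_or_ge (i : ℕ) M with hiM | hMi
        · exact le_sup (by simpa using hiM)
        · obtain ⟨k, hki, hk⟩ : ∃ k < i, f i ≤ f k := by simpa [IsRecord] using h i hMi hi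
          exact hk.trans (ih k hki (hki.trans hi))
    · simpa using Fin.lt_def.2 ((mem_filter.1 hi).2.trans_le hMj)

lemma mem_winEvent_iff_recordCount_eq_one (hM : M ≠ 0) {σ : Equiv.Perm (Fin n)} :
    σ ∈ winEvent n M ↔ recordCount M σ = 1 := by
  rcases n.eq_zero_or_pos with rfl | hn
  · simp [winEvent, hM, recordCount_eq_zero_of_le (Nat.zero_le M)]
  obtain ⟨p, hp⟩ : ∃ p, (σ p : ℕ) = n - 1 := ⟨σ.symm ⟨n - 1, by omega⟩, by simp⟩
  have top_iff (j : Fin n) : (σ j : ℕ) = n - 1 ↔ j = p := by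
    rw [← hp, Fin.val_inj, σ.apply_eq_iff_eq]
  have le_top (i : Fin n) : σ i ≤ σ p := Fin.le_def.2 (by omega)
  simp only [winEvent, if_neg hM, mem_filter_univ, top_iff]
  rw [recordCount_eq_one_iff_of_forall_le le_top]
  constructor
  · rintro ⟨j, hMj, rfl, hsup⟩
    exact ⟨hMj, (sup_lt_eq_sup_lt_iff_forall_not_isRecord (fun i => (σ i : ℕ)) hM hMj).1 hsup⟩
  · rintro ⟨hMp, h⟩
    exact ⟨p, hMp, rfl, (sup_lt_eq_sup_lt_iff_forall_not_isRecord _ hM hMp).2 h⟩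

end Records

section InsertLast

variable {n M : ℕ}

/-- The permutation of `Fin (n + 1)` whose last value is `r` and whose first `n` values are in the
same relative order as those of `τ`. -/
def insertLast (r : Fin (n + 1)) (τ : Equiv.Perm (Fin n)) : Equiv.Perm (Fin (n + 1)) :=
  ((finSuccEquiv' (Fin.last n)).trans τ.optionCongr).trans (finSuccEquiv' r).symm

@[simp]
lemma insertLast_last (r : Fin (n + 1)) (τ : Equiv.Perm (Fin n)) :
    insertLast r τ (Fin.last n) = r := by
  simp [insertLast]

@[simp]
lemma insertLast_castSucc (r : Fin (n + 1)) (τ : Equiv.Perm (Fin n)) (i : Fin n) :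
    insertLast r τ i.castSucc = r.succAbove (τ i) := by
  simp [insertLast, finSuccEquiv'_last_apply_castSucc]

lemma insertLast_bijective : (Function.uncurry (insertLast (n := n))).Bijective := by
  refine (Fintype.bijective_iff_injective_and_card _).2 ⟨?_, ?_⟩
  · rintro ⟨r, τ⟩ ⟨r', τ'⟩ h
    replace h : insertLast r τ = insertLast r' τ' := h
    obtain rfl : r = r' := by simpa using DFunLike.congr_fun h (Fin.last n)
    have τ_eq : τ = τ' := Equiv.ext fun i => by simpa using DFunLike.congr_fun h i.castSucc
    rw [τ_eq]
  · simp [Fintype.card_perm, Nat.factorial_succ]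

lemma card_filter_univ_castSucc (p : Fin (n + 1) → Prop) [DecidablePred p] :
    #{i | p i} = #{i : Fin n | p i.castSucc} + if p (Fin.last n) then 1 else 0 := by
  simp only [card_filter, Fin.sum_univ_castSucc]

lemma invCount_eq_sum (σ : Equiv.Perm (Fin n)) :
    invCount n σ = ∑ j, #{i | i < j ∧ σ j < σ i} := by
  simp only [invCount, card_filter, Fintype.sum_prod_type_right]

lemma card_filter_lt_last_and_apply_last_lt (σ : Equiv.Perm (Fin (n + 1))) :
    #{i | i < Fin.last n ∧ σ (Fin.last n) < σ i} = n - (σ (Fin.last n) : ℕ) := by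
  have card_eq : #{i | i < Fin.last n ∧ σ (Fin.last n) < σ i} = #(Ioi (σ (Fin.last n))) := by
    refine card_equiv σ fun i => ?_
    simp only [mem_filter_univ, mem_Ioi, and_iff_right_iff_imp]
    exact fun hi => Fin.lt_last_iff_ne_last.2 fun h => hi.ne (h ▸ rfl)
  rw [card_eq, Fin.card_Ioi, Nat.add_sub_cancel]

lemma invCount_insertLast (r : Fin (n + 1)) (τ : Equiv.Perm (Fin n)) :
    invCount (n + 1) (insertLast r τ) = invCount n τ + (n - (r : ℕ)) := by
  rw [invCount_eq_sum, invCount_eq_sum, Fin.sum_univ_castSucc,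
    card_filter_lt_last_and_apply_last_lt, insertLast_last]
  simp [card_filter_univ_castSucc, (Fin.castSucc_lt_last _).not_gt]

lemma isRecord_insertLast_castSucc (r : Fin (n + 1)) (τ : Equiv.Perm (Fin n)) (j : Fin n) :
    IsRecord (insertLast r τ) j.castSucc ↔ IsRecord τ j := by
  simp [IsRecord, Fin.forall_fin_succ', (Fin.castSucc_lt_last _).not_gt]

lemma recordCount_insertLast (hM : M ≤ n) (r : Fin (n + 1)) (τ : Equiv.Perm (Fin n)) :
    recordCount M (insertLast r τ) = recordCount M τ + if r = Fin.last n then 1 else 0 := by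
  simp only [recordCount, card_filter_univ_castSucc, isRecord_insertLast_castSucc,
    isRecord_last_iff, insertLast_last, Fin.val_castSucc, Fin.val_last, hM, true_and]

end InsertLast

section Mean

variable {n M : ℕ} {q : ℝ}

lemma sum_pow_invCount_mul_succ {R : Type*} [CommSemiring R] (q : R)
    (f : Equiv.Perm (Fin (n + 1)) → R) :
    ∑ σ, q ^ invCount (n + 1) σ * f σ =
      ∑ r : Fin (n + 1), q ^ (n - (r : ℕ)) * ∑ τ, q ^ invCount n τ * f (insertLast r τ) := by
  rw [← insertLast_bijective.sum_comp, Fintype.sum_prod_type]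
  simp only [Function.uncurry_apply_pair, invCount_insertLast, mul_sum, pow_add]
  exact sum_congr rfl fun r _ => sum_congr rfl fun τ _ => by ring

lemma sum_fin_pow_sub {R : Type*} [Semiring R] (q : R) (n : ℕ) :
    ∑ r : Fin (n + 1), q ^ (n - (r : ℕ)) = ∑ i ∈ range (n + 1), q ^ i := by
  rw [Fin.sum_univ_eq_sum_range (fun r => q ^ (n - r)) (n + 1)]
  exact sum_range_reflect (fun i => q ^ i) (n + 1)

lemma mallowsZ_succ (n : ℕ) (q : ℝ) :
    mallowsZ (n + 1) q = (∑ i ∈ range (n + 1), q ^ i) * mallowsZ n q := by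
  have h := sum_pow_invCount_mul_succ (n := n) q fun _ => 1
  simpa only [mallowsZ, mul_one, ← sum_mul, sum_fin_pow_sub] using h

lemma geom_sum_succ_ne_zero {R : Type*} [Ring R] [LinearOrder R] [IsStrictOrderedRing R] {x : R}
    (hx : -1 < x) (n : ℕ) : ∑ i ∈ range (n + 1), x ^ i ≠ 0 :=
  (geom_sum_pos' (neg_lt_iff_pos_add.1 hx) n.succ_ne_zero).ne'

lemma mallowsZ_ne_zero (hq : -1 < q) (n : ℕ) : mallowsZ n q ≠ 0 := by
  induction n with
  | zero => simp [mallowsZ, invCount]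
  | succ n ih => exact mallowsZ_succ n q ▸ mul_ne_zero (geom_sum_succ_ne_zero hq n) ih

/-- The expectation of `f` under the Mallows distribution. -/
noncomputable def mallowsMean (n : ℕ) (q : ℝ) (f : Equiv.Perm (Fin n) → ℝ) : ℝ :=
  (∑ σ, q ^ invCount n σ * f σ) / mallowsZ n q

lemma mallowsMean_const (hq : -1 < q) (c : ℝ) : mallowsMean n q (fun _ => c) = c := by
  rw [mallowsMean, ← sum_mul]
  exact mul_div_cancel_left₀ c (mallowsZ_ne_zero hq n)

lemma mallowsProb_filter_eq_mallowsMean (P : Equiv.Perm (Fin n) → Prop) [DecidablePred P] :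
    mallowsProb n q {σ | P σ} = mallowsMean n q fun σ => if P σ then 1 else 0 := by
  simp only [mallowsProb, mallowsMean, sum_filter, mul_ite, mul_one, mul_zero]

lemma mallowsMean_recordCount_succ (hq : -1 < q) (hM : M ≤ n) (g : ℕ → ℝ) :
    mallowsMean (n + 1) q (fun σ => g (recordCount M σ)) =
      (∑ i ∈ range (n + 1), q ^ i)⁻¹ * mallowsMean n q (fun σ => g (recordCount M σ + 1)) +
      (1 - (∑ i ∈ range (n + 1), q ^ i)⁻¹) * mallowsMean n q (fun σ => g (recordCount M σ)) := by
  have weights : ∑ r : Fin n, q ^ (n - (r : ℕ)) = (∑ i ∈ range (n + 1), q ^ i) - 1 := by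
    rw [← sum_fin_pow_sub, Fin.sum_univ_castSucc]
    simp
  have hG := geom_sum_succ_ne_zero hq n
  have hZ := mallowsZ_ne_zero hq n
  simp only [mallowsMean, sum_pow_invCount_mul_succ, mallowsZ_succ, recordCount_insertLast hM,
    Fin.sum_univ_castSucc, Fin.castSucc_ne_last, if_true, if_false, add_zero, Fin.val_castSucc,
    Fin.val_last, Nat.sub_self, pow_zero, one_mul, ← sum_mul, weights]
  field_simp
  ring

end Mean

section Limit

open scoped Topology

variable {q p : ℝ}

lemma tendsto_inv_geom_sum (hq : q ∈ Set.Ioc (-1 : ℝ) 1) :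
    Tendsto (fun n : ℕ => (∑ i ∈ range n, q ^ i)⁻¹) atTop (𝓝 (1 - q)) := by
  rcases hq.2.lt_or_eq with hq1 | rfl
  · have h := (hasSum_geometric_of_abs_lt_one (abs_lt.2 ⟨hq.1, hq1⟩)).tendsto_sum_nat
    simpa using h.inv₀ (inv_ne_zero (sub_pos.2 hq1).ne')
  · simpa using tendsto_inv_atTop_nhds_zero_nat (𝕜 := ℝ)

theorem tendsto_mallowsMean_recordCount (hq : -1 < q)
    (hp : Tendsto (fun n : ℕ => (∑ i ∈ range n, q ^ i)⁻¹) atTop (𝓝 p)) (t : ℕ) (g : ℕ → ℝ) :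
    Tendsto (fun M => mallowsMean (M + t) q fun σ => g (recordCount M σ)) atTop
      (𝓝 (∑ ij ∈ antidiagonal t, t.choose ij.1 * (p ^ ij.1 * (1 - p) ^ ij.2 * g ij.1))) := by
  induction t generalizing g with
  | zero => simp [recordCount_eq_zero_of_le, mallowsMean_const hq]
  | succ t ih =>
    have hp' : Tendsto (fun M => (∑ i ∈ range (M + t + 1), q ^ i)⁻¹) atTop (𝓝 p) :=
      (tendsto_add_atTop_iff_nat (t + 1)).2 hp
    have recursion := (hp'.mul (ih fun k => g (k + 1))).add
      ((hp'.const_sub 1).mul (ih g))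
    convert recursion using 2 with M
    · exact mallowsMean_recordCount_succ hq (Nat.le_add_right M t) g
    · rw [sum_antidiagonal_choose_succ_mul fun i j => p ^ i * (1 - p) ^ j * g i, add_comm,
        mul_sum, mul_sum]
      congr 1 <;> refine sum_congr rfl fun ij hij => ?_
      · rw [Nat.choose_symm_of_eq_add (mem_antidiagonal.1 hij).symm]
        ring
      · ring

theorem tendsto_mallowsProb_recordCount_eq (hq : -1 < q)
    (hp : Tendsto (fun n : ℕ => (∑ i ∈ range n, q ^ i)⁻¹) atTop (𝓝 p)) (t k : ℕ) :
    Tendsto (fun M => mallowsProb (M + t) q {σ | recordCount M σ = k}) atTop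
      (𝓝 (t.choose k * p ^ k * (1 - p) ^ (t - k))) := by
  simp only [mallowsProb_filter_eq_mallowsMean]
  convert tendsto_mallowsMean_recordCount hq hp t fun i => if i = k then 1 else 0
  rw [Nat.sum_antidiagonal_eq_sum_range_succ_mk]
  rcases le_or_gt k t with hkt | htk
  · simp [Nat.lt_succ_iff.2 hkt, mul_assoc]
  · simp [Nat.choose_eq_zero_of_lt htk]

end Limit

theorem stmt_10_general (q : ℝ) (hq : q ∈ Set.Ioc (-1 : ℝ) 1) (L : ℕ) :
    Tendsto (fun n : ℕ => succProb n (n - L) q) atTop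
      (nhds ((1 - q) * q ^ (L - 1) * L)) := by
  have winEvent_eq (M : ℕ) (hM : M ≠ 0) :
      winEvent (M + L) M = ({σ | recordCount M σ = 1} : Finset _) := by
    ext σ
    rw [mem_winEvent_iff_recordCount_eq_one hM, mem_filter_univ]
  rw [← tendsto_add_atTop_iff_nat L]
  have one_record := tendsto_mallowsProb_recordCount_eq hq.1 (tendsto_inv_geom_sum hq) L 1
  have limit_eq : (L.choose 1 : ℝ) * (1 - q) ^ 1 * (1 - (1 - q)) ^ (L - 1) =
      (1 - q) * q ^ (L - 1) * L := by
    rw [Nat.choose_one_right, sub_sub_cancel]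
    ring
  refine limit_eq ▸ one_record.congr' ?_
  filter_upwards [eventually_ne_atTop 0] with M hM
  rw [Nat.add_sub_cancel, succProb, winEvent_eq M hM]

theorem stmt_10 (q : ℝ) (hq : q ∈ Set.Ioo (0 : ℝ) 1) (L : ℕ) (hL : 1 ≤ L) :
    Tendsto (fun n : ℕ => succProb n (n - L) q) atTop
      (nhds ((1 - q) * q ^ (L - 1) * L)) :=
  stmt_10_general q ⟨by linarith [hq.1], hq.2.le⟩ L
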